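/- arXiv:math/9904143 — 2 statements merged into one kernel-verified Lean document; each statement's English description precedes it below -/
import Mathlib

section
/- Let K be a field. The ring Γ of number-theoretic functions is an integral domain, and it is a local ring whose unique maximal ideal consists precisely of the functions f with f(1) = 0. -/
/-!
Let `K` be a field.  The ring `Γ` of number-theoretic functions (all functions
`ℕ+ → K`, implemented in Mathlib as `ArithmeticFunction K`, i.e. functions
`ℕ → K` vanishing at `0`, with pointwise addition and the Dirichlet convolution
product) is an integral domain, and it is a local ring whose unique maximal
ideal consists precisely of the functions `f` with `f 1 = 0`.
-/

theorem arithFun_mul_ne_zero {K : Type*} [Field K] {f g : ArithmeticFunction K}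
    (hf : f ≠ 0) (hg : g ≠ 0) : f * g ≠ 0 := by
  classical
  have hf' : ∃ n, f n ≠ 0 := by
    by_contra! h
    exact hf (ArithmeticFunction.ext h)
  have hg' : ∃ n, g n ≠ 0 := by
    by_contra! h
    exact hg (ArithmeticFunction.ext h)
  obtain ⟨a, ha, hamin⟩ : ∃ a, f a ≠ 0 ∧ ∀ m < a, f m = 0 :=
    ⟨Nat.find hf', Nat.find_spec hf', fun m hm => not_not.1 (Nat.find_min hf' hm)⟩
  obtain ⟨b, hb, hbmin⟩ : ∃ b, g b ≠ 0 ∧ ∀ m < b, g m = 0 :=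
    ⟨Nat.find hg', Nat.find_spec hg', fun m hm => not_not.1 (Nat.find_min hg' hm)⟩
  have ha0 : a ≠ 0 := by
    rintro rfl
    exact ha f.map_zero
  have hb0 : b ≠ 0 := by
    rintro rfl
    exact hb g.map_zero
  intro h
  have h1 : (f * g) (a * b) = f a * g b := by
    rw [ArithmeticFunction.mul_apply]
    refine Finset.sum_eq_single (a, b) ?_ ?_
    · rintro ⟨c, d⟩ hcd hne
      have hcd' : c * d = a * b := (Nat.mem_divisorsAntidiagonal.1 hcd).1
      rcases lt_trichotomy c a with hc | hc | hc
      · simp [hamin c hc]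
      · subst hc
        exact absurd (by rw [Nat.eq_of_mul_eq_mul_left (Nat.pos_of_ne_zero ha0) hcd']) hne
      · have hd : d < b := by
          by_contra! hd
          have := Nat.mul_lt_mul_of_lt_of_le hc hd (by omega)
          omega
        simp [hbmin d hd]
    · intro hn
      exact absurd (Nat.mem_divisorsAntidiagonal.2 ⟨rfl, mul_ne_zero ha0 hb0⟩) hn
  rw [h, ArithmeticFunction.zero_apply] at h1
  exact mul_ne_zero ha hb h1.symm

theorem arithmeticFunction_isDomain_isLocalRing_maximalIdeal
    (K : Type*) [Field K] :
    IsDomain (ArithmeticFunction K) ∧ IsLocalRing (ArithmeticFunction K) ∧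
      ∀ I : Ideal (ArithmeticFunction K),
        I.IsMaximal ↔ (I : Set (ArithmeticFunction K)) =
          {f : ArithmeticFunction K | f 1 = 0} := by
  have hu : ∀ f : ArithmeticFunction K, IsUnit f ↔ f 1 ≠ 0 := fun f => by
    rw [ArithmeticFunction.isUnit_iff_isUnit_apply_one, isUnit_iff_ne_zero]
  have hnt : Nontrivial (ArithmeticFunction K) :=
    ⟨⟨1, 0, fun h => one_ne_zero (α := K) (by
      rw [← ArithmeticFunction.one_one (R := K), h, ArithmeticFunction.zero_apply])⟩⟩
  have hnz : NoZeroDivisors (ArithmeticFunction K) := ⟨fun {f g} h => by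
    by_contra! hn
    exact arithFun_mul_ne_zero hn.1 hn.2 h⟩
  have hloc : IsLocalRing (ArithmeticFunction K) :=
    IsLocalRing.of_nonunits_add fun f g hf hg => by
      rw [mem_nonunits_iff, hu, not_not] at *
      rw [ArithmeticFunction.add_apply, hf, hg, add_zero]
  have hmax : (IsLocalRing.maximalIdeal (ArithmeticFunction K) : Set (ArithmeticFunction K)) =
      {f : ArithmeticFunction K | f 1 = 0} := by
    ext f
    rw [SetLike.mem_coe, IsLocalRing.mem_maximalIdeal, mem_nonunits_iff, hu, not_not]
    rfl
  refine ⟨NoZeroDivisors.to_isDomain _, hloc, fun I => ⟨fun hI => ?_, fun hI => ?_⟩⟩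
  · rw [IsLocalRing.eq_maximalIdeal hI, hmax]
  · rw [SetLike.coe_injective (hI.trans hmax.symm)]
    exact IsLocalRing.maximalIdeal.isMaximal _
end

section
/- Let K be a field of characteristic zero. Then the ring Γ of number-theoretic functions is a unique factorization domain: every nonzero element factors into irreducible elements, uniquely up to order and unit factors. -/
theorem weierstrass_irreducible_prime {A : Type*} [CommRing A] [IsDomain A]
    [UniqueFactorizationMonoid A] [IsLocalRing A]
    [IsAdicComplete (IsLocalRing.maximalIdeal A) A] (f : PowerSeries A)
    (hf : Irreducible f) (h0 : f.map (IsLocalRing.residue A) ≠ 0) : Prime f := by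
  obtain ⟨w, u, H⟩ := f.exists_isWeierstrassFactorization h0
  have hirr : Irreducible (w : PowerSeries A) := by
    have : Associated (w : PowerSeries A) f := ⟨H.isUnit.unit, H.eq_mul.symm⟩
    exact this.irreducible_iff.2 hf
  have hmap := H.isDistinguishedAt.map_eq_X_pow
  have key : ∀ g h : Polynomial A, w = g * h → IsUnit (g : PowerSeries A) → IsUnit g := by
    intro g h hgh hg
    have hlc : IsUnit g.leadingCoeff := by
      have := H.isDistinguishedAt.monic
      rw [hgh, Polynomial.Monic, Polynomial.leadingCoeff_mul] at this
      exact IsUnit.of_mul_eq_one _ this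
    have hc : IsUnit (g.coeff 0) := by
      have := PowerSeries.isUnit_iff_constantCoeff.1 hg
      simpa using this
    let φ := Ideal.Quotient.mk (IsLocalRing.maximalIdeal A)
    let : Field (A ⧸ IsLocalRing.maximalIdeal A) := Ideal.Quotient.field _
    have hd : g.map φ ∣ Polynomial.X ^ w.natDegree := by
      rw [← hmap, hgh, Polynomial.map_mul]; exact dvd_mul_right _ _
    obtain ⟨i, -, hi⟩ := (dvd_prime_pow Polynomial.prime_X _).1 hd
    have hc' : (g.map φ).coeff 0 ≠ 0 := by
      rw [Polynomial.coeff_map]; exact (hc.map φ).ne_zero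
    have hi0 : i = 0 := by
      by_contra hne
      apply hc'
      have : Polynomial.X ∣ g.map φ := (dvd_pow_self _ hne).trans hi.symm.dvd
      exact Polynomial.X_dvd_iff.1 this
    subst hi0
    have hu : IsUnit (g.map φ) := by
      rw [pow_zero] at hi; exact hi.isUnit_iff.2 isUnit_one
    have hdeg : g.natDegree = 0 := by
      rw [← Polynomial.natDegree_map_of_leadingCoeff_ne_zero φ (hlc.map φ).ne_zero]
      exact Polynomial.natDegree_eq_zero_of_isUnit hu
    rw [Polynomial.eq_C_of_natDegree_eq_zero hdeg]
    exact hc.map Polynomial.C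
  have hw : Irreducible w := by
    refine ⟨fun h => hirr.not_isUnit ?_, ?_⟩
    · exact h.map (Polynomial.coeToPowerSeries.ringHom (R := A))
    · intro a b hab
      have : (w : PowerSeries A) = (a : PowerSeries A) * b := by rw [hab, Polynomial.coe_mul]
      rcases hirr.isUnit_or_isUnit this with h | h
      · exact Or.inl (key a b hab h)
      · exact Or.inr (key b a (by rw [hab, mul_comm]) h)
  have hwp : Prime w := hw.prime
  have e := H.algEquivQuotient
  have h1 : (Ideal.span {w}).IsPrime := (Ideal.span_singleton_prime hwp.ne_zero).2 hwp
  have h2 : IsDomain (Polynomial A ⧸ Ideal.span {w}) := Ideal.Quotient.isDomain _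
  have h3 : IsDomain (PowerSeries A ⧸ Ideal.span {f}) := e.symm.toMulEquiv.isDomain _
  have h4 : (Ideal.span {f}).IsPrime := (Ideal.Quotient.isDomain_iff_prime _).1 h3
  exact (Ideal.span_singleton_prime hf.ne_zero).1 h4

theorem exists_weight (n : ℕ) : ∀ S : Set (Fin n → ℕ), S.Nonempty →
    ∃ d₀ ∈ S, ∃ c : Fin n → ℕ, (∀ i, 0 < c i) ∧ (∀ i, i.val = 0 → c i = 1) ∧
      ∀ d ∈ S, d ≠ d₀ → ∑ i, d₀ i * c i < ∑ i, d i * c i := by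
  induction n with
  | zero =>
    rintro S ⟨d, hd⟩
    exact ⟨d, hd, 1, fun i => i.elim0, fun i => i.elim0,
      fun e _ he => (he (Subsingleton.elim _ _)).elim⟩
  | succ n ih =>
    intro S hS
    classical
    have hne : ∃ e, ∃ d ∈ S, d (Fin.last n) = e := by
      obtain ⟨d, hd⟩ := hS
      exact ⟨_, d, hd, rfl⟩
    let e := Nat.find hne
    obtain ⟨d1, hd1, hd1e⟩ := Nat.find_spec hne
    obtain ⟨d', hd', c', hc1, hc2, hc3⟩ :=
      ih {d | (Fin.snoc d e : Fin (n+1) → ℕ) ∈ S} ⟨Fin.init d1, by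
        change Fin.snoc (Fin.init d1) (Nat.find hne) ∈ S
        rw [← hd1e, Fin.snoc_init_self]; exact hd1⟩
    refine ⟨Fin.snoc d' e, hd', Fin.snoc c' (1 + ∑ i, d' i * c' i), ?_, ?_, ?_⟩
    · intro i
      refine Fin.lastCases ?_ (fun j => ?_) i
      · simp
      · simpa using hc1 j
    · intro i
      refine Fin.lastCases ?_ (fun j => ?_) i
      · intro h
        simp only [Fin.val_last] at h
        subst h
        rw [Fin.snoc_last]
        simp
      · intro h
        simpa using hc2 j (by simpa using h)
    · intro d hd hne'
      simp only [Fin.sum_univ_castSucc, Fin.snoc_castSucc, Fin.snoc_last]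
      have hle : e ≤ d (Fin.last n) := Nat.find_min' hne ⟨d, hd, rfl⟩
      rcases hle.eq_or_lt with h | h
      · have := hc3 (Fin.init d) (by
          change Fin.snoc (Fin.init d) e ∈ S
          rw [h, Fin.snoc_init_self]; exact hd) (by
          rintro rfl
          exact hne' (by rw [h, Fin.snoc_init_self]))
        simp only [Fin.init] at this
        rw [← h]; omega
      · have : (e + 1) * (1 + ∑ i, d' i * c' i) ≤ d (Fin.last n) * (1 + ∑ i, d' i * c' i) :=
          Nat.mul_le_mul_right _ h
        have := Nat.zero_le (∑ i : Fin n, d i.castSucc * c' i)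
        nlinarith

section shear
open MvPowerSeries

variable {K : Type*} [Field K] {n : ℕ}

/-- The substitution `X 0 ↦ X 0`, `X i ↦ X i + t * X 0 ^ c i` for `i ≠ 0`. -/
noncomputable def shearVec (t : K) (c : Fin (n + 1) → ℕ) (i : Fin (n + 1)) :
    MvPowerSeries (Fin (n + 1)) K :=
  if i = 0 then X 0 else X i + C t * X 0 ^ c i

theorem shearVec_hasSubst (t : K) (c : Fin (n + 1) → ℕ) (hc : ∀ i, 0 < c i) :
    HasSubst (shearVec t c) := by
  apply hasSubst_of_constantCoeff_zero
  intro i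
  unfold shearVec
  split_ifs
  · simp
  · simp [(hc i).ne']

theorem shear_comp (t : K) (c : Fin (n + 1) → ℕ) (hc : ∀ i, 0 < c i)
    (f : MvPowerSeries (Fin (n + 1)) K) :
    subst (shearVec (-t) c) (subst (shearVec t c) f) = f := by
  rw [subst_comp_subst_apply (shearVec_hasSubst t c hc) (shearVec_hasSubst (-t) c hc)]
  have hs := shearVec_hasSubst (-t) c hc
  have : (fun s => subst (shearVec (-t) c) (shearVec t c s)) = (X : Fin (n+1) → _) := by
    funext s
    by_cases h : s = 0
    · subst h
      simp only [shearVec, if_true]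
      rw [subst_X hs]; simp [shearVec]
    · conv_lhs => rw [shearVec, if_neg h]
      rw [subst_add hs, subst_mul hs, subst_pow hs, subst_X hs, subst_X hs, subst_C]
      simp [shearVec, h]
  rw [this, subst_self]; rfl

/-- The shearing automorphism. -/
noncomputable def shearEquiv (c : Fin (n + 1) → ℕ) (hc : ∀ i, 0 < c i) :
    MvPowerSeries (Fin (n + 1)) K ≃* MvPowerSeries (Fin (n + 1)) K where
  toFun := subst (shearVec 1 c)
  invFun := subst (shearVec (-1) c)
  left_inv := shear_comp 1 c hc
  right_inv f := by simpa using shear_comp (-1) c hc f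
  map_mul' := subst_mul (shearVec_hasSubst 1 c hc)

theorem exists_shear (f : MvPowerSeries (Fin (n + 1)) K) (hf : f ≠ 0) :
    ∃ σ : MvPowerSeries (Fin (n + 1)) K ≃* MvPowerSeries (Fin (n + 1)) K, ∃ k : ℕ,
      coeff (Finsupp.cons k 0) (σ f) ≠ 0 := by
  classical
  obtain ⟨e, he⟩ : ∃ e, coeff e f ≠ 0 := by
    by_contra! h
    exact hf (MvPowerSeries.ext (by simpa using h))
  obtain ⟨d₀, hd₀, c, hc, hc0, hmin⟩ := exists_weight (n + 1)
    {d | coeff (Finsupp.equivFunOnFinite.symm d) f ≠ 0} ⟨⇑e, by simpa using he⟩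
  refine ⟨shearEquiv c hc, ∑ i, d₀ i * c i, ?_⟩
  change coeff _ (subst (shearVec 1 c) f) ≠ 0
  rw [coeff_subst (shearVec_hasSubst 1 c hc)]
  let j : Unit ↪ Fin (n + 1) := ⟨fun _ => 0, fun _ _ _ => rfl⟩
  have hsv : ∀ i, killCompl (R := K) j (shearVec 1 c i) = X () ^ c i := by
    intro i
    have hX0 : killCompl (R := K) j (X 0) = X () := killCompl_X (e := j) ()
    unfold shearVec
    split_ifs with h
    · rw [hX0, hc0 i (by simp [h]), pow_one]
    · have : killCompl (R := K) j (X i) = 0 := by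
        apply killCompl_X_eq_zero
        rintro ⟨_, hx⟩
        exact h hx.symm
      rw [map_add, map_mul, map_pow, hX0, this]; simp
  have hcoef : ∀ (d : Fin (n + 1) →₀ ℕ) (k : ℕ),
      coeff (Finsupp.cons k 0) (d.prod fun s e => (shearVec (1 : K) c s) ^ e) =
        if k = ∑ i, d i * c i then 1 else 0 := by
    intro d k
    have h1 : (Finsupp.cons k 0 : Fin (n + 1) →₀ ℕ) =
        Finsupp.embDomain j (Finsupp.single () k) := by
      rw [Finsupp.embDomain_single]
      ext i
      refine Fin.cases ?_ (fun i => ?_) i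
      · change k = (Finsupp.single (0 : Fin (n + 1)) k) 0
        simp
      · change _ = (Finsupp.single (0 : Fin (n + 1)) k) i.succ
        simp
    rw [h1, ← coeff_killCompl, Finsupp.prod_fintype _ _ (by simp), map_prod]
    simp only [map_pow, hsv, ← pow_mul]
    rw [Finset.prod_pow_eq_pow_sum, coeff_X_pow]
    simp only [mul_comm]
    congr 1
    simp [Finsupp.unique_single_eq_iff]
  rw [finsum_eq_single _ (Finsupp.equivFunOnFinite.symm d₀)]
  · rw [hcoef]; simpa using hd₀
  · intro d hd
    by_cases h : coeff d f = 0
    · simp [h]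
    · rw [hcoef, if_neg, smul_zero]
      refine (hmin (⇑d) (by simpa using h) ?_).ne
      rintro rfl
      exact hd (by simp)

theorem mem_span_X_of_constantCoeff (n : ℕ) (f : MvPowerSeries (Fin n) K)
    (h0 : constantCoeff f = 0) : f ∈ Ideal.span (Set.range (X : Fin n → MvPowerSeries (Fin n) K)) := by
  induction n with
  | zero =>
    have : f = 0 := by
      apply (isEmptyEquiv (Fin 0) K).injective
      simpa using h0
    rw [this]; exact Ideal.zero_mem _
  | succ n ih =>
    let E := MvPowerSeries.finSuccEquiv K n
    let φ : MvPowerSeries (Fin n) K →+* MvPowerSeries (Fin (n + 1)) K :=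
      (E.symm : _ →+* _).comp PowerSeries.C
    have hφ : ∀ j, φ (X j) = X j.succ := by
      intro j
      change E.symm (PowerSeries.C (X j)) = _
      rw [AlgEquiv.symm_apply_eq, finSuccEquiv_X_succ]
    obtain ⟨q, hq⟩ : PowerSeries.X ∣ E f - PowerSeries.C (PowerSeries.constantCoeff (E f)) := by
      rw [PowerSeries.X_dvd_iff]; simp
    have hf : f = X 0 * E.symm q + φ (PowerSeries.constantCoeff (E f)) := by
      apply E.injective
      rw [map_add, map_mul, finSuccEquiv_X_zero]
      change _ = _ + E (E.symm _)
      rw [AlgEquiv.apply_symm_apply, AlgEquiv.apply_symm_apply, ← hq, sub_add_cancel]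
    have h1 : constantCoeff (PowerSeries.constantCoeff (E f)) = 0 := by
      rw [← coeff_zero_eq_constantCoeff_apply, ← PowerSeries.coeff_zero_eq_constantCoeff_apply,
        coeff_coeff_finSuccEquiv, Finsupp.cons_zero_zero]
      simpa using h0
    have h2 := Ideal.mem_map_of_mem φ (ih _ h1)
    rw [Ideal.map_span] at h2
    rw [hf]
    refine Ideal.add_mem _ (Ideal.mul_mem_right _ _ (Ideal.subset_span ⟨0, rfl⟩)) ?_
    refine Ideal.span_mono ?_ h2
    rintro _ ⟨_, ⟨j, rfl⟩, rfl⟩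
    exact ⟨j.succ, (hφ j).symm⟩

theorem isAdicComplete_mvPowerSeries (n : ℕ) :
    IsAdicComplete (IsLocalRing.maximalIdeal (MvPowerSeries (Fin n) K))
      (MvPowerSeries (Fin n) K) := by
  have h : IsLocalRing.maximalIdeal (MvPowerSeries (Fin n) K) = Ideal.span (Set.range X) := by
    apply le_antisymm
    · intro f hf
      have h0 : constantCoeff f = 0 := by
        by_contra h
        exact hf (isUnit_iff_constantCoeff.2 (isUnit_iff_ne_zero.2 h))
      exact mem_span_X_of_constantCoeff n f h0
    · rw [Ideal.span_le]
      rintro _ ⟨i, rfl⟩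
      intro h
      have := isUnit_iff_constantCoeff.1 h
      simp at this
  rw [h]; infer_instance

theorem isDomain_mvPowerSeries (σ : Type*) : IsDomain (MvPowerSeries σ K) :=
  NoZeroDivisors.to_isDomain _

theorem ufm_mvPowerSeries_fin (n : ℕ) :
    UniqueFactorizationMonoid (MvPowerSeries (Fin n) K) := by
  induction n with
  | zero =>
    exact (isEmptyEquiv (Fin 0) K).symm.toMulEquiv.uniqueFactorizationMonoid inferInstance
  | succ n ih =>
    have := isAdicComplete_mvPowerSeries (K := K) n
    have := isDomain_mvPowerSeries (K := K) (Fin n)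
    have := isDomain_mvPowerSeries (K := K) (Fin (n + 1))
    have hp : ∀ f : MvPowerSeries (Fin (n + 1)) K, Irreducible f → Prime f := by
      intro f hf
      obtain ⟨σ, k, hk⟩ := exists_shear f hf.ne_zero
      let E : MvPowerSeries (Fin (n + 1)) K ≃* PowerSeries (MvPowerSeries (Fin n) K) :=
        σ.trans (MvPowerSeries.finSuccEquiv K n).toMulEquiv
      have h1 : Irreducible (E f) := (MulEquiv.irreducible_iff E).2 hf
      have h2 : Prime (E f) := by
        apply weierstrass_irreducible_prime _ h1
        intro h0
        have h3 := congrArg (PowerSeries.coeff k) h0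
        rw [PowerSeries.coeff_map, map_zero, IsLocalRing.residue_eq_zero_iff] at h3
        apply h3
        rw [isUnit_iff_constantCoeff, isUnit_iff_ne_zero, ← coeff_zero_eq_constantCoeff_apply]
        change coeff 0 (PowerSeries.coeff k (MvPowerSeries.finSuccEquiv K n (σ f))) ≠ 0
        rwa [coeff_coeff_finSuccEquiv]
      exact (MulEquiv.prime_iff E).1 h2
    have hwf : WfDvdMonoid (MvPowerSeries (Fin (n + 1)) K) := inferInstance
    exact { hwf with irreducible_iff_prime := ⟨hp _, Prime.irreducible⟩ }

end shear

section omega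
open UniqueFactorizationMonoid

variable {R : Type*} [CommRing R] [IsDomain R] [UniqueFactorizationMonoid R]

/-- The number of prime factors. -/
noncomputable def numFactors (x : R) : ℕ := Multiset.card (factors x)

theorem numFactors_mul {x y : R} (hx : x ≠ 0) (hy : y ≠ 0) :
    numFactors (x * y) = numFactors x + numFactors y := by
  unfold numFactors
  rw [Multiset.card_eq_card_of_rel (factors_mul hx hy), Multiset.card_add]

theorem numFactors_irreducible {x : R} (hx : Irreducible x) : numFactors x = 1 := by
  obtain ⟨p, -, hp⟩ := prime_factors_irreducible hx
    ⟨fun b hb => prime_of_factor b hb, factors_prod hx.ne_zero⟩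
  simp [numFactors, hp]

theorem isUnit_of_numFactors {x : R} (hx : x ≠ 0) (h : numFactors x = 0) : IsUnit x := by
  have h0 : factors x = 0 := Multiset.card_eq_zero.1 h
  have := factors_prod hx
  rw [h0, Multiset.prod_zero] at this
  exact this.isUnit isUnit_one

theorem irreducible_of_numFactors {x : R} (hx : x ≠ 0) (h : numFactors x = 1) :
    Irreducible x := by
  obtain ⟨p, hp⟩ := Multiset.card_eq_one.1 h
  have := factors_prod hx
  rw [hp, Multiset.prod_singleton] at this
  exact this.irreducible (irreducible_of_factor p (by rw [hp]; simp))

theorem numFactors_unit {x : R} (h : IsUnit x) : numFactors x = 0 := by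
  have h1 := numFactors_mul h.ne_zero h.ne_zero
  obtain ⟨u, rfl⟩ := h
  unfold numFactors
  rw [Multiset.card_eq_zero, Multiset.eq_zero_iff_forall_notMem]
  intro p hp
  exact (irreducible_of_factor p hp).not_isUnit (isUnit_of_dvd_unit (dvd_of_mem_factors hp) u.isUnit)

variable {S : Type*} [CommRing S] [IsDomain S] [UniqueFactorizationMonoid S]

theorem numFactors_le_map (π : R →+* S) (hloc : ∀ x, IsUnit (π x) → IsUnit x) (x : R) :
    π x ≠ 0 → numFactors x ≤ numFactors (π x) := by
  induction x using induction_on_prime with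
  | h₁ => simp
  | h₂ x hx => intro _; simp [numFactors_unit hx]
  | h₃ a p ha hp ih =>
    intro h
    rw [map_mul] at h ⊢
    have hpa := mul_ne_zero_iff.1 h
    rw [numFactors_mul hpa.1 hpa.2, numFactors_mul hp.ne_zero ha,
      numFactors_irreducible hp.irreducible]
    have h1 := ih hpa.2
    have h2 : numFactors (π p) ≠ 0 := fun h0 =>
      hp.not_isUnit (hloc _ (isUnit_of_numFactors hpa.1 h0))
    omega

theorem exists_prime_lift (π : R →+* S) (hloc : ∀ x, IsUnit (π x) → IsUnit x)
    (hsurj : Function.Surjective π) (x : R) : π x ≠ 0 → numFactors x = numFactors (π x) →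
    ∀ d : S, Prime d → d ∣ π x → ∃ d' : R, Prime d' ∧ d' ∣ x ∧ π d' = d := by
  induction x using induction_on_prime with
  | h₁ => simp
  | h₂ x hx =>
    intro _ _ d hd hdx
    exact (hd.not_isUnit (isUnit_of_dvd_unit hdx (hx.map π))).elim
  | h₃ a p ha hp ih =>
    intro h hn d hd hdx
    rw [map_mul] at h hn hdx
    have hpa := mul_ne_zero_iff.1 h
    rw [numFactors_mul hpa.1 hpa.2, numFactors_mul hp.ne_zero ha,
      numFactors_irreducible hp.irreducible] at hn
    have h1 := numFactors_le_map π hloc a hpa.2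
    have h2 : numFactors (π p) ≠ 0 := fun h0 =>
      hp.not_isUnit (hloc _ (isUnit_of_numFactors hpa.1 h0))
    rcases hd.dvd_or_dvd hdx with h3 | h3
    · have hirr := irreducible_of_numFactors hpa.1 (by omega)
      obtain ⟨u, hu⟩ := (hd.irreducible.associated_of_dvd hirr h3).symm
      obtain ⟨v, hv⟩ := hsurj u
      have hvu : IsUnit v := hloc v (by rw [hv]; exact u.isUnit)
      have has : Associated p (p * v) := ⟨hvu.unit, rfl⟩
      refine ⟨p * v, has.prime hp, has.symm.dvd.trans (dvd_mul_right _ _), ?_⟩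
      rw [map_mul, hv, hu]
    · obtain ⟨d', h4, h5, h6⟩ := ih hpa.2 (by omega) d hd h3
      exact ⟨d', h4, h5.mul_left _, h6⟩

end omega

section limit
open MvPowerSeries

variable {K : Type*} [Field K]

/-- Restriction to the first `m` variables. -/
noncomputable def lv (m : ℕ) : MvPowerSeries ℕ K →ₐ[K] MvPowerSeries (Fin m) K :=
  killCompl Fin.valEmbedding

/-- Restriction from `m + 1` variables to `m` variables. -/
noncomputable def tr (m : ℕ) : MvPowerSeries (Fin (m + 1)) K →ₐ[K] MvPowerSeries (Fin m) K :=
  killCompl Fin.castSuccEmb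

theorem emb_emb (m : ℕ) (x : Fin m →₀ ℕ) :
    Finsupp.embDomain Fin.valEmbedding (Finsupp.embDomain Fin.castSuccEmb x) =
      Finsupp.embDomain Fin.valEmbedding x := by
  simp only [Finsupp.embDomain_eq_mapDomain]
  rw [← Finsupp.mapDomain_comp]
  rfl

theorem exists_emb (m : ℕ) (y : ℕ →₀ ℕ) (hy : ∀ i ∈ y.support, i < m) :
    ∃ x : Fin m →₀ ℕ, Finsupp.embDomain Fin.valEmbedding x = y := by
  have : y ∈ Set.range (Finsupp.embDomain (M := ℕ) (Fin.valEmbedding (n := m))) := by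
    rw [Finsupp.mem_range_embDomain_iff]
    intro i hi
    exact ⟨⟨i, hy i hi⟩, rfl⟩
  exact this

theorem emb_lt (m : ℕ) (x : Fin m →₀ ℕ) :
    ∀ i ∈ (Finsupp.embDomain Fin.valEmbedding x).support, i < m := by
  intro i hi
  rw [Finsupp.support_embDomain, Finset.mem_map] at hi
  obtain ⟨a, -, rfl⟩ := hi
  exact a.2

theorem exists_bound (y : ℕ →₀ ℕ) : ∃ j, ∀ i ∈ y.support, i < j :=
  ⟨y.support.sup id + 1, fun _ hi => Nat.lt_succ_of_le (Finset.le_sup (f := id) hi)⟩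

theorem tr_lv (m : ℕ) (f : MvPowerSeries ℕ K) : tr m (lv (m + 1) f) = lv m f := by
  ext x
  simp only [tr, lv, coeff_killCompl, emb_emb]

theorem tr_surjective (m : ℕ) : Function.Surjective (tr (K := K) m) := fun f =>
  ⟨rename Fin.castSuccEmb f, killCompl_rename_app f⟩

theorem constantCoeff_killCompl' {σ τ : Type*} (e : σ ↪ τ) (f : MvPowerSeries τ K) :
    constantCoeff (killCompl e f) = constantCoeff f := by
  rw [← coeff_zero_eq_constantCoeff_apply, coeff_killCompl]; simp

theorem killCompl_local {σ τ : Type*} (e : σ ↪ τ) (f : MvPowerSeries τ K)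
    (h : IsUnit (killCompl e f)) : IsUnit f := by
  rw [isUnit_iff_constantCoeff] at h ⊢
  rwa [constantCoeff_killCompl'] at h

theorem tr_local (m : ℕ) (x : MvPowerSeries (Fin (m + 1)) K) (h : IsUnit (tr m x)) : IsUnit x :=
  killCompl_local _ x h

theorem lv_local (m : ℕ) (x : MvPowerSeries ℕ K) (h : IsUnit (lv m x)) : IsUnit x :=
  killCompl_local _ x h

theorem lv_ext (N : ℕ) (f g : MvPowerSeries ℕ K) (h : ∀ j, lv (N + j) f = lv (N + j) g) :
    f = g := by
  ext y
  obtain ⟨j, hj⟩ := exists_bound y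
  obtain ⟨x, rfl⟩ := exists_emb (N + j) y (fun i hi => (hj i hi).trans_le (Nat.le_add_left _ _))
  have := congrArg (coeff x) (h j)
  simpa only [lv, coeff_killCompl] using this

theorem glue (N : ℕ) (d : ∀ j, MvPowerSeries (Fin (N + j)) K)
    (hd : ∀ j, tr (N + j) (d (j + 1)) = d j) :
    ∃ D : MvPowerSeries ℕ K, ∀ j, lv (N + j) D = d j := by
  let E : ℕ → MvPowerSeries ℕ K := fun j => rename (Fin.valEmbedding (n := N + j)) (d j)
  have hE : ∀ j x, coeff (Finsupp.embDomain Fin.valEmbedding x) (E j) = coeff x (d j) :=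
    fun j x => coeff_embDomain_rename _ _ _
  have step : ∀ j y, (∀ i ∈ y.support, i < N + j) → coeff y (E (j + 1)) = coeff y (E j) := by
    intro j y hy
    obtain ⟨x, rfl⟩ := exists_emb (N + j) y hy
    rw [hE, ← hd j, tr, coeff_killCompl, ← hE (j + 1)]
    congr 2
    exact (emb_emb (N + j) x).symm
  have stable : ∀ y j k, (∀ i ∈ y.support, i < N + j) → coeff y (E (j + k)) = coeff y (E j) := by
    intro y j k hy
    induction k with
    | zero => rfl
    | succ k ih =>
      rw [← ih, ← step (j + k) y (fun i hi => (hy i hi).trans_le (by omega))]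
      rfl
  choose b hb using exists_bound
  have hb' : ∀ y : ℕ →₀ ℕ, ∀ i ∈ y.support, i < N + b y :=
    fun y i hi => (hb y i hi).trans_le (Nat.le_add_left _ _)
  let D : MvPowerSeries ℕ K := fun y => coeff y (E (b y))
  have hDc : ∀ y, coeff y D = coeff y (E (b y)) := fun y => rfl
  refine ⟨D, fun j => ?_⟩
  ext x
  rw [lv, coeff_killCompl, hDc, ← hE]
  set y := Finsupp.embDomain Fin.valEmbedding x with hy
  rw [← stable y (b y) j (hb' y), ← stable y j (b y) (by rw [hy]; exact emb_lt _ x), add_comm]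

theorem dvd_of_lv_dvd (N : ℕ) (D f : MvPowerSeries ℕ K) (h0 : ∀ j, lv (N + j) D ≠ 0)
    (h : ∀ j, lv (N + j) D ∣ lv (N + j) f) : D ∣ f := by
  choose q hq using h
  obtain ⟨Q, hQ⟩ := glue N q (fun j => by
    have h1 := congrArg (tr (N + j)) (hq (j + 1))
    have h2 : tr (N + j) (lv (N + (j + 1)) f) = lv (N + j) f := tr_lv (N + j) f
    have h3 : tr (N + j) (lv (N + (j + 1)) D) = lv (N + j) D := tr_lv (N + j) D
    rw [map_mul, h2, h3, hq j] at h1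
    exact (mul_left_cancel₀ (h0 j) h1).symm)
  refine ⟨Q, lv_ext N _ _ fun j => ?_⟩
  rw [map_mul, hQ, hq]

theorem prime_of_lv_prime (N : ℕ) (D : MvPowerSeries ℕ K) (h : ∀ j, Prime (lv (N + j) D)) :
    Prime D := by
  have h0 : ∀ j, lv (N + j) D ≠ 0 := fun j => (h j).ne_zero
  have down : ∀ (a : MvPowerSeries ℕ K) (j k : ℕ), lv (N + (j + k)) D ∣ lv (N + (j + k)) a →
      lv (N + j) D ∣ lv (N + j) a := by
    intro a j k
    induction k with
    | zero => exact id
    | succ k ih =>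
      intro hk
      apply ih
      have := map_dvd (tr (N + (j + k))) hk
      have h2 : tr (N + (j + k)) (lv (N + (j + (k + 1))) a) = lv (N + (j + k)) a := tr_lv _ a
      have h3 : tr (N + (j + k)) (lv (N + (j + (k + 1))) D) = lv (N + (j + k)) D := tr_lv _ D
      rwa [h2, h3] at this
  refine ⟨?_, ?_, ?_⟩
  · rintro rfl
    exact h0 0 (map_zero _)
  · intro hu
    exact (h 0).not_isUnit (hu.map _)
  · intro a b hab
    have hor : ∀ j, lv (N + j) D ∣ lv (N + j) a ∨ lv (N + j) D ∣ lv (N + j) b := by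
      intro j
      apply (h j).dvd_or_dvd
      rw [← map_mul]
      exact map_dvd _ hab
    by_cases ha : ∀ j, lv (N + j) D ∣ lv (N + j) a
    · exact Or.inl (dvd_of_lv_dvd N D a h0 ha)
    · push Not at ha
      obtain ⟨j₀, hj₀⟩ := ha
      refine Or.inr (dvd_of_lv_dvd N D b h0 fun j => ?_)
      apply down b j j₀
      refine (hor (j + j₀)).resolve_left fun hc => hj₀ (down a j₀ j ?_)
      rwa [add_comm j₀ j]

theorem exists_prime_dvd (f : MvPowerSeries ℕ K) (hf : f ≠ 0) (hu : ¬ IsUnit f) :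
    ∃ D, Prime D ∧ D ∣ f := by
  have := fun n => isDomain_mvPowerSeries (K := K) (Fin n)
  have := fun n => ufm_mvPowerSeries_fin (K := K) n
  obtain ⟨M, hM⟩ : ∃ M, lv M f ≠ 0 := by
    by_contra! h
    exact hf (lv_ext 0 f 0 fun j => by rw [h, map_zero])
  have hM' : ∀ j, lv (M + j) f ≠ 0 := by
    intro j
    induction j with
    | zero => exact hM
    | succ j ih =>
      intro h
      apply ih
      rw [← tr_lv]
      change tr (M + j) (lv (M + (j + 1)) f) = 0
      rw [h, map_zero]
  -- stabilise the number of factors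
  obtain ⟨j₀, hj₀⟩ : ∃ j₀, ∀ j, numFactors (lv (M + j₀) f) ≤ numFactors (lv (M + j) f) := by
    exact ⟨_, fun j => Function.argmin_le (fun j => numFactors (lv (M + j) f)) j⟩
  have hanti : ∀ m, lv m f ≠ 0 → numFactors (lv (m + 1) f) ≤ numFactors (lv m f) := by
    intro m hm
    have := numFactors_le_map (tr (K := K) m : MvPowerSeries (Fin (m + 1)) K →+* MvPowerSeries (Fin m) K)
      (fun x hx => tr_local _ x hx)
      (lv (m + 1) f)
    simp only [RingHom.coe_coe, tr_lv] at this
    exact this hm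
  have hle : ∀ j, numFactors (lv (M + (j₀ + j)) f) ≤ numFactors (lv (M + j₀) f) := by
    intro j
    induction j with
    | zero => exact le_rfl
    | succ j ih => exact (hanti (M + (j₀ + j)) (hM' _)).trans ih
  have heq : ∀ j, numFactors (lv (M + j₀ + j) f) = numFactors (lv (M + j₀) f) := fun j => by
    rw [add_assoc]
    exact le_antisymm (hle j) (hj₀ _)
  have hne : ∀ j, lv (M + j₀ + j) f ≠ 0 := fun j => by rw [add_assoc]; exact hM' _
  generalize M + j₀ = N at heq hne
  obtain ⟨d0, hd0, hd0f⟩ := WfDvdMonoid.exists_irreducible_factor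
    (fun h => hu (lv_local _ f h) : ¬ IsUnit (lv (N + 0) f)) (hne 0)
  have hstep : ∀ j (d : {d : MvPowerSeries (Fin (N + j)) K // Prime d ∧ d ∣ lv (N + j) f}),
      ∃ d' : {d : MvPowerSeries (Fin (N + (j + 1))) K // Prime d ∧ d ∣ lv (N + (j + 1)) f},
        tr (N + j) d'.1 = d.1 := by
    rintro j ⟨d, hd, hdf⟩
    have h1 : tr (N + j) (lv (N + (j + 1)) f) = lv (N + j) f := tr_lv _ f
    obtain ⟨d', h2, h3, h4⟩ := exists_prime_lift 
      (tr (K := K) (N + j) : MvPowerSeries (Fin (N + j + 1)) K →+* MvPowerSeries (Fin (N + j)) K)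
      (fun x hx => tr_local _ x hx) (tr_surjective _) (lv (N + (j + 1)) f)
      (by simpa only [RingHom.coe_coe, h1] using hne j)
      (by
        simp only [RingHom.coe_coe, h1]
        rw [heq, heq])
      d hd (by simpa only [RingHom.coe_coe, h1] using hdf)
    exact ⟨⟨d', h2, h3⟩, h4⟩
  choose next hnext using hstep
  let d : ∀ j, {d : MvPowerSeries (Fin (N + j)) K // Prime d ∧ d ∣ lv (N + j) f} :=
    fun j => Nat.rec ⟨d0, hd0.prime, hd0f⟩ (fun j x => next j x) j
  obtain ⟨D, hD⟩ := glue N (fun j => (d j).1) (fun j => hnext j (d j))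
  have hDp : ∀ j, Prime (lv (N + j) D) := fun j => by rw [hD]; exact (d j).2.1
  refine ⟨D, prime_of_lv_prime N D hDp, dvd_of_lv_dvd N D f (fun j => (hDp j).ne_zero) ?_⟩
  intro j
  rw [hD]
  exact (d j).2.2

theorem ufm_mvPowerSeries_nat : UniqueFactorizationMonoid (MvPowerSeries ℕ K) := by
  have := isDomain_mvPowerSeries (K := K) ℕ
  have hwf : WfDvdMonoid (MvPowerSeries ℕ K) := by
    refine ⟨Subrelation.wf (r := InvImage (· < ·) (MvPowerSeries.order)) ?_
      (InvImage.wf _ wellFounded_lt)⟩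
    rintro a b ⟨ha, c, hc, rfl⟩
    change a.order < (a * c).order
    rw [order_mul]
    by_cases h0 : c = 0
    · subst h0
      rw [order_zero, add_top]
      exact lt_top_iff_ne_top.2 (by rwa [Ne, order_eq_top_iff])
    · have hc0 : c.order ≠ 0 := by
        rw [order_ne_zero_iff_constCoeff_eq_zero]
        by_contra h
        exact hc (isUnit_iff_constantCoeff.2 (isUnit_iff_ne_zero.2 h))
      have ht : a.order ≠ ⊤ := by rwa [Ne, order_eq_top_iff]
      refine lt_of_lt_of_le ((ENat.lt_add_one_iff ht).2 le_rfl) ?_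
      gcongr
      exact Order.one_le_iff_ne_zero.2 hc0
  have hp : ∀ f : MvPowerSeries ℕ K, Irreducible f → Prime f := by
    intro f hf
    obtain ⟨D, hD, hDf⟩ := exists_prime_dvd f hf.ne_zero hf.not_isUnit
    exact (hD.irreducible.associated_of_dvd hf hDf).prime hD
  exact { hwf with irreducible_iff_prime := ⟨hp _, Prime.irreducible⟩ }

end limit

section transfer

/-- Exponent vectors correspond to positive integers, by unique factorization. -/
theorem exists_exponent_equiv : ∃ v : (ℕ →₀ ℕ) ≃ ℕ+, ∀ a b, v (a + b) = v a * v b := by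
  obtain ⟨_⟩ := nonempty_denumerable Nat.Primes
  let e : Nat.Primes ≃ ℕ := Denumerable.eqv Nat.Primes
  let w : (ℕ →₀ ℕ) ≃+ Multiset Nat.Primes :=
    (Finsupp.domCongr e.symm).trans Multiset.toFinsupp.symm
  refine ⟨w.toEquiv.trans PNat.factorMultisetEquiv.symm, fun a b => ?_⟩
  change PrimeMultiset.prod (w (a + b)) = PrimeMultiset.prod (w a) * PrimeMultiset.prod (w b)
  rw [map_add]
  exact PrimeMultiset.prod_add _ _

variable {K : Type*} [Field K]

theorem exists_arithmetic_mulEquiv :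
    Nonempty (ArithmeticFunction K ≃* MvPowerSeries ℕ K) := by
  obtain ⟨v, hv⟩ := exists_exponent_equiv
  let F : ArithmeticFunction K → MvPowerSeries ℕ K := fun f y => f (v y)
  have hF : ∀ f y, MvPowerSeries.coeff y (F f) = f (v y) := fun f y => rfl
  let G : MvPowerSeries ℕ K → ArithmeticFunction K := fun g =>
    ⟨fun n => if h : 0 < n then MvPowerSeries.coeff (v.symm (n.toPNat h)) g else 0, by simp⟩
  have hG : ∀ g n, (h : 0 < n) → G g n = MvPowerSeries.coeff (v.symm (n.toPNat h)) g :=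
    fun g n h => dif_pos h
  refine ⟨⟨⟨F, G, fun f => ?_, fun g => ?_⟩, fun f g => ?_⟩⟩
  · ext n
    rcases Nat.eq_zero_or_pos n with rfl | hn
    · simp
    · rw [hG _ _ hn, hF, v.apply_symm_apply]; rfl
  · ext y
    rw [hF, hG _ _ (v y).pos]
    congr 2
    exact v.symm_apply_apply y
  · change F (f * g) = F f * F g
    ext y
    rw [hF, MvPowerSeries.coeff_mul, ArithmeticFunction.mul_apply]
    symm
    refine Finset.sum_bij (fun p _ => ((v p.1 : ℕ), (v p.2 : ℕ))) ?_ ?_ ?_ ?_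
    · intro p hp
      rw [Finset.HasAntidiagonal.mem_antidiagonal] at hp
      rw [Nat.mem_divisorsAntidiagonal]
      refine ⟨?_, (v y).ne_zero⟩
      rw [← hp, hv, PNat.mul_coe]
    · rintro ⟨a, b⟩ _ ⟨c, d⟩ _ h
      simp only [Prod.mk.injEq, PNat.coe_inj, EmbeddingLike.apply_eq_iff_eq] at h
      simp [h.1, h.2]
    · rintro ⟨m, n⟩ h
      rw [Nat.mem_divisorsAntidiagonal] at h
      have hmn : m * n ≠ 0 := by rw [h.1]; exact h.2
      have hm : 0 < m := Nat.pos_of_ne_zero (left_ne_zero_of_mul hmn)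
      have hn : 0 < n := Nat.pos_of_ne_zero (right_ne_zero_of_mul hmn)
      refine ⟨(v.symm (m.toPNat hm), v.symm (n.toPNat hn)), ?_, ?_⟩
      swap
      · rw [v.apply_symm_apply, v.apply_symm_apply]; rfl
      rw [Finset.HasAntidiagonal.mem_antidiagonal]
      apply v.injective
      rw [hv]
      apply PNat.coe_injective
      rw [v.apply_symm_apply, v.apply_symm_apply]
      exact h.1
    · intro p _
      rw [hF, hF]

end transfer

theorem arithmeticFunction_uniqueFactorizationDomain
    (K : Type*) [Field K] [CharZero K] :
    IsDomain (ArithmeticFunction K) ∧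
    (∀ f : ArithmeticFunction K, f ≠ 0 → ¬IsUnit f →
      ∃ s : Multiset (ArithmeticFunction K),
        (∀ g ∈ s, Irreducible g) ∧ s.prod = f) ∧
    (∀ s t : Multiset (ArithmeticFunction K),
      (∀ g ∈ s, Irreducible g) → (∀ g ∈ t, Irreducible g) →
      Associated s.prod t.prod → Multiset.Rel Associated s t) := by
  obtain ⟨e⟩ := exists_arithmetic_mulEquiv (K := K)
  have h1 := isDomain_mvPowerSeries (K := K) ℕ
  have h2 := ufm_mvPowerSeries_nat (K := K)
  have hdom : IsDomain (ArithmeticFunction K) := e.isDomain _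
  have hufm : UniqueFactorizationMonoid (ArithmeticFunction K) :=
    e.symm.uniqueFactorizationMonoid h2
  refine ⟨hdom, fun f hf hu => ?_, fun s t hs ht h => ?_⟩
  · obtain ⟨s, hs, hsf, -⟩ := (WfDvdMonoid.not_isUnit_iff_exists_factors_eq f hf).1 hu
    exact ⟨s, hs, hsf⟩
  · exact UniqueFactorizationMonoid.factors_unique hs ht h
end
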